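/- Let λ₁, λ₂, λ₃, λ₄, λ_S, λ_{S1}, λ_{S2} be real numbers, μ ≥ 0, ρ ∈ [0,1]. Set λ₄₀' = 4λ_Sλ₁ − λ_{S1}², λ₀₄' = 4λ_Sλ₂ − λ_{S2}², λ₃₁' = 2λ_{S1}μρ, λ₁₃' = 2λ_{S2}μρ, λ₂₂' = 4λ_Sλ₃ + 4λ_Sλ₄ρ² − μ²ρ² − 2λ_{S1}λ_{S2}, and Δ' = 4(12λ₄₀'λ₀₄' − 3λ₃₁'λ₁₃' + λ₂₂'²)³ − (72λ₄₀'λ₂₂'λ₀₄' + 9λ₃₁'λ₂₂'λ₁₃' − 2λ₂₂'³ − 27λ₄₀'λ₁₃'² − 27λ₃₁'²λ₀₄')². Assume λ₄₀' > 0 and λ₀₄' > 0. Then 4λ_S Ṽ(h₁,h₂) − M(h₁,h₂)² ≥ 0 for all h₁ ≥ 0, h₂ ≥ 0 if and only if one of the following holds: (1) Δ' ≤ 0 and λ₁₃'√λ₄₀' + λ₃₁'√λ₀₄' > 0; or (2) λ₁₃' ≥ 0, λ₃₁' ≥ 0, and λ₂₂' + 2√(λ₄₀'λ₀₄') ≥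 0; or (3) Δ' ≥ 0, |λ₃₁'√λ₀₄' − λ₁₃'√λ₄₀'| ≤ 4√(λ₄₀'λ₂₂'λ₀₄' + 2λ₄₀'λ₀₄'√(λ₄₀'λ₀₄')), and either (i) −2√(λ₄₀'λ₀₄') ≤ λ₂₂' ≤ 6√(λ₄₀'λ₀₄'), or (ii) λ₂₂' > 6√(λ₄₀'λ₀₄') and λ₃₁'√λ₀₄' + λ₁₃'√λ₄₀' ≥ −4√(λ₄₀'λ₂₂'λ₀₄' − 2λ₄₀'λ₀₄'√(λ₄₀'λ₀₄')). -/

import Mathlib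

/-!
After rescaling both variables the quartic is `x⁴ + a x³ + b x² + c x + 1`. Such a quartic always
splits over `ℝ` as `(x² + 2eA x + e²)(x² + 2fB x + f²)` with `e, f > 0` and `e f = 1`. A factor is
nonnegative on the half-line when `-1 ≤ A`, and otherwise has two distinct positive roots, across
which the other factor must change sign as well. Hence the quartic is nonnegative on the half-line
iff `-1 ≤ A` and `-1 ≤ B`, or the two factors coincide. The sign conditions of the theorem reduce to
the same condition on `A, B, e, f`, through the product formula for the discriminant and
`a ± c = 2 (e ± f)(A ± B)`.
-/

open Topology

/-- `27` times the discriminant of the binary quartic with the given coefficients. -/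
def quarticDisc (l40 l31 l22 l13 l04 : ℝ) : ℝ :=
  4 * (12 * l40 * l04 - 3 * l31 * l13 + l22 ^ 2) ^ 3 -
    (72 * l40 * l22 * l04 + 9 * l31 * l22 * l13 - 2 * l22 ^ 3 -
      27 * l40 * l13 ^ 2 - 27 * l31 ^ 2 * l04) ^ 2

/-- Copositivity of a binary quartic form: nonnegativity on the closed first quadrant. -/
def IsCopositiveQuartic (l40 l31 l22 l13 l04 : ℝ) : Prop :=
  ∀ x y : ℝ, 0 ≤ x → 0 ≤ y →
    0 ≤ l40 * x ^ 4 + l31 * x ^ 3 * y + l22 * x ^ 2 * y ^ 2 + l13 * x * y ^ 3 + l04 * y ^ 4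

/-- The sign conditions on the coefficients of a binary quartic form with positive end coefficients
that characterize its copositivity. -/
def QuarticCriterion (l40 l31 l22 l13 l04 : ℝ) : Prop :=
  (quarticDisc l40 l31 l22 l13 l04 ≤ 0 ∧ 0 < l13 * √l40 + l31 * √l04) ∨
  (0 ≤ l13 ∧ 0 ≤ l31 ∧ 0 ≤ l22 + 2 * √(l40 * l04)) ∨
  (0 ≤ quarticDisc l40 l31 l22 l13 l04 ∧
    |l31 * √l04 - l13 * √l40| ≤ 4 * √(l40 * l22 * l04 + 2 * l40 * l04 * √(l40 * l04)) ∧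
    ((-2 * √(l40 * l04) ≤ l22 ∧ l22 ≤ 6 * √(l40 * l04)) ∨
     (6 * √(l40 * l04) < l22 ∧
      -4 * √(l40 * l22 * l04 - 2 * l40 * l04 * √(l40 * l04)) ≤ l31 * √l04 + l13 * √l40)))

/-- The factorization `x⁴ + a x³ + b x² + c x + 1 = (x² + 2eA x + e²)(x² + 2fB x + f²)` with
`e, f > 0`, stated through the coefficients. In this normalization a factor has two distinct
positive roots exactly when its parameter `A` or `B` is less than `-1`. -/
structure IsQuadraticSplitting (a b c e f A B : ℝ) : Prop where
  left_pos : 0 < e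
  right_pos : 0 < f
  mul_eq_one : e * f = 1
  coeff_three : a = 2 * (e * A + f * B)
  coeff_two : b = e ^ 2 + f ^ 2 + 4 * A * B
  coeff_one : c = 2 * (f * A + e * B)

/-- The resolvent cubic of `x⁴ + a x³ + b x² + c x + 1`; its roots are the values of `e² + f²` over
the factorizations into quadratics with constant terms `e²` and `f²`, where `e f = 1`. -/
def quarticResolvent (a b c t : ℝ) : ℝ :=
  (t - b) * (t ^ 2 - 4) + a * c * t - a ^ 2 - c ^ 2

theorem quarticCriterion_one_iff {a b c : ℝ} :
    QuarticCriterion 1 a b c 1 ↔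
      (quarticDisc 1 a b c 1 ≤ 0 ∧ 0 < c + a) ∨
      (0 ≤ c ∧ 0 ≤ a ∧ 0 ≤ b + 2) ∨
      (0 ≤ quarticDisc 1 a b c 1 ∧ |a - c| ≤ 4 * √(b + 2) ∧
        ((-2 ≤ b ∧ b ≤ 6) ∨ (6 < b ∧ -4 * √(b - 2) ≤ a + c))) := by
  simp only [QuarticCriterion, Real.sqrt_one, one_mul, mul_one]

theorem abs_le_mul_sqrt_iff_sq_le {x y k : ℝ} (hk : 0 ≤ k) (hy : 0 ≤ y) :
    |x| ≤ k * √y ↔ x ^ 2 ≤ k ^ 2 * y := by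
  rw [← sq_le_sq₀ (abs_nonneg x) (by positivity), sq_abs, mul_pow, Real.sq_sqrt hy]

theorem eq_zero_of_eventually_sub_mul_nonneg {g : ℝ → ℝ} {r : ℝ} (hg : ContinuousAt g r)
    (h : ∀ᶠ x in 𝓝 r, 0 ≤ (x - r) * g x) : g r = 0 := by
  have hmin : IsLocalMin (fun x => (x - r) * g x) r := by
    filter_upwards [h] with x hx
    simpa using hx
  refine hmin.hasDerivAt_eq_zero (hasDerivAt_iff_tendsto_slope.2 ?_)
  refine (hg.tendsto.mono_left nhdsWithin_le_nhds).congr' ?_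
  filter_upwards [self_mem_nhdsWithin] with x hx
  have hxr : x - r ≠ 0 := sub_ne_zero.2 hx
  simp [slope_def_field, hxr]

theorem eq_of_quadratic_mul_nonneg {r s p q : ℝ} (hr : 0 < r) (hs : 0 < s) (hrs : r ≠ s)
    (h : ∀ x, 0 ≤ x → 0 ≤ (x - r) * (x - s) * (x ^ 2 + p * x + q)) :
    p = -(r + s) ∧ q = r * s := by
  have root : ∀ u v : ℝ, 0 < u → u ≠ v →
      (∀ x, 0 ≤ x → 0 ≤ (x - u) * (x - v) * (x ^ 2 + p * x + q)) → u ^ 2 + p * u + q = 0 := by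
    intro u v hu huv hn
    have := eq_zero_of_eventually_sub_mul_nonneg (r := u)
      (g := fun x => (x - v) * (x ^ 2 + p * x + q)) (by fun_prop) (by
        filter_upwards [lt_mem_nhds hu] with x hx
        simpa only [mul_assoc] using hn x hx.le)
    exact (mul_eq_zero.1 this).resolve_left (sub_ne_zero.2 huv)
  have hroot_r := root r s hr hrs h
  have hroot_s := root s r hs hrs.symm fun x hx => by simpa only [mul_comm (x - s)] using h x hx
  have hp : r + s + p = 0 := by
    refine (mul_eq_zero.1 ?_).resolve_left (sub_ne_zero.2 hrs)
    linear_combination hroot_r - hroot_s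
  exact ⟨by linear_combination hp, by linear_combination hroot_r - r * hp⟩

theorem quadratic_nonneg_of_neg_one_le {e A x y : ℝ} (he : 0 ≤ e) (hA : -1 ≤ A) (hx : 0 ≤ x)
    (hy : 0 ≤ y) : 0 ≤ x ^ 2 + 2 * (e * A) * x * y + e ^ 2 * y ^ 2 := by
  have hA' : 0 ≤ A + 1 := by linarith
  calc 0 ≤ (x - e * y) ^ 2 + 2 * (e * (A + 1) * x * y) := by positivity
    _ = _ := by ring

theorem exists_quarticResolvent_eq_zero {a c : ℝ} (b : ℝ) (hac : a ≠ c) :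
    ∃ t, 2 < t ∧ quarticResolvent a b c t = 0 := by
  set T := 3 + |b| + (a ^ 2 + c ^ 2) with hT
  have hT3 : 3 ≤ T := by
    have : 0 ≤ |b| + (a ^ 2 + c ^ 2) := by positivity
    linarith
  have h_two : quarticResolvent a b c 2 < 0 := by
    have : 0 < (a - c) ^ 2 := sq_pos_of_ne_zero (sub_ne_zero.2 hac)
    calc quarticResolvent a b c 2 = -(a - c) ^ 2 := by rw [quarticResolvent]; ring
      _ < 0 := neg_lt_zero.2 this
  have h_T : 0 ≤ quarticResolvent a b c T := by
    have hlin : a ^ 2 + c ^ 2 ≤ T - b := by linarith [hT, le_abs_self b]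
    have hquad : T + 1 ≤ T ^ 2 - 4 := by nlinarith
    have hprod : (a ^ 2 + c ^ 2) * (T + 1) ≤ (T - b) * (T ^ 2 - 4) :=
      mul_le_mul hlin hquad (by linarith) ((by positivity : 0 ≤ a ^ 2 + c ^ 2).trans hlin)
    have hform : 0 ≤ T * (a ^ 2 + a * c + c ^ 2) :=
      mul_nonneg (by linarith) (by nlinarith [sq_nonneg (a + c)])
    rw [quarticResolvent]
    linarith
  have hcont : Continuous (quarticResolvent a b c) := by
    unfold quarticResolvent
    fun_prop
  obtain ⟨t, ht, h0⟩ := intermediate_value_Ioc (by linarith) hcont.continuousOn ⟨h_two, h_T⟩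
  exact ⟨t, ht.1, h0⟩

-- With `t = e² + f²` and `e f = 1` one has `(e ± f)² = t ± 2`, and the equations
-- `a ± c = 2 (e ± f)(A ± B)` give `A ± B`; the equation for `b` is then the resolvent.
theorem exists_isQuadraticSplitting_of_quarticResolvent {a b c t : ℝ} (ht : 2 < t)
    (h : quarticResolvent a b c t = 0) : ∃ e f A B, IsQuadraticSplitting a b c e f A B := by
  obtain ⟨v, hv, hv2⟩ : ∃ v : ℝ, 0 < v ∧ v ^ 2 = t + 2 :=
    ⟨√(t + 2), Real.sqrt_pos.2 (by linarith), Real.sq_sqrt (by linarith)⟩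
  obtain ⟨w, hw, hw2⟩ : ∃ w : ℝ, 0 < w ∧ w ^ 2 = t - 2 :=
    ⟨√(t - 2), Real.sqrt_pos.2 (by linarith), Real.sq_sqrt (by linarith)⟩
  have hwv : w < v := lt_of_pow_lt_pow_left₀ 2 hv.le (by linarith)
  obtain ⟨σ, hσ⟩ : ∃ σ, a + c = 2 * v * σ := ⟨(a + c) / (2 * v), by field_simp⟩
  obtain ⟨δ, hδ⟩ : ∃ δ, a - c = 2 * w * δ := ⟨(a - c) / (2 * w), by field_simp⟩
  have hσδ : σ ^ 2 - δ ^ 2 = b - t := by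
    have key : (a + c) ^ 2 * w ^ 2 - (a - c) ^ 2 * v ^ 2 = 4 * (b - t) * (v ^ 2 * w ^ 2) := by
      rw [hv2, hw2]
      rw [quarticResolvent] at h
      linear_combination 4 * h
    rw [hσ, hδ] at key
    refine mul_left_cancel₀ (show 4 * (v ^ 2 * w ^ 2) ≠ 0 by positivity) ?_
    linear_combination key
  exact ⟨(v + w) / 2, (v - w) / 2, (σ + δ) / 2, (σ - δ) / 2,
    { left_pos := by linarith
      right_pos := by linarith
      mul_eq_one := by linear_combination (hv2 - hw2) / 4
      coeff_three := by linear_combination (hσ + hδ) / 2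
      coeff_two := by linear_combination -hσδ - (hv2 + hw2) / 2
      coeff_one := by linear_combination (hσ - hδ) / 2 }⟩

theorem exists_isQuadraticSplitting_palindromic (a b : ℝ) :
    ∃ e f A B, IsQuadraticSplitting a b a e f A B := by
  rcases le_or_gt (4 * (b - 2)) (a ^ 2) with hb | hb
  · have hs := Real.sq_sqrt (sub_nonneg.2 hb)
    exact ⟨1, 1, (a + √(a ^ 2 - 4 * (b - 2))) / 4, (a - √(a ^ 2 - 4 * (b - 2))) / 4,
      one_pos, one_pos, one_mul 1, by ring, by linear_combination hs / 4, by ring⟩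
  · have hb2 : 2 ≤ b := by linarith [sq_nonneg a]
    obtain ⟨t, ht, h0⟩ := intermediate_value_Ioc (f := fun t => (t - b) * (t + 2) + a ^ 2) hb2
      (by fun_prop) (show (0 : ℝ) ∈ _ from ⟨by linarith, by simp [sq_nonneg]⟩)
    refine exists_isQuadraticSplitting_of_quarticResolvent ht.1 ?_
    rw [quarticResolvent]
    linear_combination (t - 2) * h0

theorem exists_isQuadraticSplitting (a b c : ℝ) :
    ∃ e f A B, IsQuadraticSplitting a b c e f A B := by
  rcases eq_or_ne a c with rfl | hac
  · exact exists_isQuadraticSplitting_palindromic a b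
  · obtain ⟨t, ht, h0⟩ := exists_quarticResolvent_eq_zero b hac
    exact exists_isQuadraticSplitting_of_quarticResolvent ht h0

namespace IsQuadraticSplitting

variable {a b c e f A B : ℝ}

theorem symm (h : IsQuadraticSplitting a b c e f A B) : IsQuadraticSplitting a b c f e B A where
  left_pos := h.right_pos
  right_pos := h.left_pos
  mul_eq_one := by rw [mul_comm, h.mul_eq_one]
  coeff_three := by rw [h.coeff_three, add_comm]
  coeff_two := by rw [h.coeff_two]; ring
  coeff_one := by rw [h.coeff_one, add_comm]

theorem eval_eq_mul (h : IsQuadraticSplitting a b c e f A B) (x y : ℝ) :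
    x ^ 4 + a * x ^ 3 * y + b * x ^ 2 * y ^ 2 + c * x * y ^ 3 + y ^ 4 =
      (x ^ 2 + 2 * (e * A) * x * y + e ^ 2 * y ^ 2) *
        (x ^ 2 + 2 * (f * B) * x * y + f ^ 2 * y ^ 2) := by
  rw [h.coeff_three, h.coeff_two, h.coeff_one]
  linear_combination (-4 * A * B * x ^ 2 * y ^ 2 - 2 * (f * A + e * B) * x * y ^ 3 -
    (e * f + 1) * y ^ 4) * h.mul_eq_one

theorem coeff_add (h : IsQuadraticSplitting a b c e f A B) : a + c = 2 * ((e + f) * (A + B)) := by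
  linear_combination h.coeff_three + h.coeff_one

theorem coeff_sub (h : IsQuadraticSplitting a b c e f A B) : a - c = 2 * ((e - f) * (A - B)) := by
  linear_combination h.coeff_three - h.coeff_one

theorem coeff_two_eq (h : IsQuadraticSplitting a b c e f A B) :
    b = (e - f) ^ 2 + 2 + 4 * (A * B) := by
  linear_combination h.coeff_two + 2 * h.mul_eq_one

theorem add_sq (h : IsQuadraticSplitting a b c e f A B) : (e + f) ^ 2 = (e - f) ^ 2 + 4 := by
  linear_combination 4 * h.mul_eq_one

theorem eq_of_isCopositiveQuartic_of_lt (h : IsQuadraticSplitting a b c e f A B)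
    (hn : IsCopositiveQuartic 1 a b c 1) (hA : A < -1) : A = B ∧ e = f := by
  obtain ⟨s, hs, hs2⟩ : ∃ s : ℝ, 0 < s ∧ s ^ 2 = A ^ 2 - 1 :=
    ⟨√(A ^ 2 - 1), Real.sqrt_pos.2 (by nlinarith), Real.sq_sqrt (by nlinarith)⟩
  have hsA : s < -A := by nlinarith
  have he := h.left_pos
  obtain ⟨hsum, hprod⟩ := eq_of_quadratic_mul_nonneg (r := e * (-A + s)) (s := e * (-A - s))
    (p := 2 * (f * B)) (q := f ^ 2) (mul_pos he (by linarith)) (mul_pos he (by linarith))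
    (fun heq => by linarith [mul_left_cancel₀ he.ne' heq])
    fun x hx => by
      have hx1 := hn x 1 hx zero_le_one
      rw [one_mul, one_mul, h.eval_eq_mul] at hx1
      convert hx1 using 1
      linear_combination (-e ^ 2 * (x ^ 2 + 2 * (f * B) * x + f ^ 2)) * hs2
  have hef : e = f := by
    rw [← sq_eq_sq₀ he.le h.right_pos.le]
    linear_combination -hprod + e ^ 2 * hs2
  refine ⟨mul_left_cancel₀ he.ne' ?_, hef⟩
  rw [← hef] at hsum
  linear_combination -hsum / 2

theorem isCopositiveQuartic_iff (h : IsQuadraticSplitting a b c e f A B) :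
    IsCopositiveQuartic 1 a b c 1 ↔ (-1 ≤ A ∧ -1 ≤ B) ∨ (A = B ∧ e = f) := by
  constructor
  · intro hn
    rcases lt_or_ge A (-1) with hA | hA
    · exact .inr (h.eq_of_isCopositiveQuartic_of_lt hn hA)
    rcases lt_or_ge B (-1) with hB | hB
    · exact .inr ((h.symm.eq_of_isCopositiveQuartic_of_lt hn hB).imp Eq.symm Eq.symm)
    exact .inl ⟨hA, hB⟩
  · intro hAB x y hx hy
    rw [one_mul, one_mul, h.eval_eq_mul]
    rcases hAB with ⟨hA, hB⟩ | ⟨rfl, rfl⟩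
    · exact mul_nonneg (quadratic_nonneg_of_neg_one_le h.left_pos.le hA hx hy)
        (quadratic_nonneg_of_neg_one_le h.right_pos.le hB hx hy)
    · exact mul_self_nonneg _

-- The last factor is the square of the resultant of the two quadratics, whose discriminants are
-- `4 e² (A² - 1)` and `4 f² (B² - 1)`.
theorem quarticDisc_eq (h : IsQuadraticSplitting a b c e f A B) :
    quarticDisc 1 a b c 1 = 432 * ((A ^ 2 - 1) * (B ^ 2 - 1)) *
      ((e ^ 2 + f ^ 2 - 2 * A * B) ^ 2 - 4 * ((A ^ 2 - 1) * (B ^ 2 - 1))) ^ 2 := by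
  have hac : a * c = 4 * (A ^ 2 + B ^ 2 + A * B * (e ^ 2 + f ^ 2)) := by
    rw [h.coeff_three, h.coeff_one]
    linear_combination 4 * (A ^ 2 + B ^ 2) * h.mul_eq_one
  have hsum : c ^ 2 + a ^ 2 = 4 * ((e ^ 2 + f ^ 2) * (A ^ 2 + B ^ 2) + 4 * A * B) := by
    rw [h.coeff_three, h.coeff_one]
    linear_combination 16 * A * B * h.mul_eq_one
  calc quarticDisc 1 a b c 1 = 4 * (12 - 3 * (a * c) + b ^ 2) ^ 3 -
      (72 * b + 9 * b * (a * c) - 2 * b ^ 3 - 27 * (c ^ 2 + a ^ 2)) ^ 2 := by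
        rw [quarticDisc]; ring
    _ = _ := by rw [hac, hsum, h.coeff_two]; ring

theorem quarticDisc_nonneg_iff (h : IsQuadraticSplitting a b c e f A B) :
    0 ≤ quarticDisc 1 a b c 1 ↔ 0 ≤ (A ^ 2 - 1) * (B ^ 2 - 1) := by
  rw [h.quarticDisc_eq]
  refine ⟨fun hD => ?_, fun hAB => by positivity⟩
  by_contra! hneg
  have hres : 0 < (e ^ 2 + f ^ 2 - 2 * A * B) ^ 2 - 4 * ((A ^ 2 - 1) * (B ^ 2 - 1)) := by
    linarith [sq_nonneg (e ^ 2 + f ^ 2 - 2 * A * B)]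
  linarith [mul_neg_of_neg_of_pos hneg (pow_pos hres 2)]

theorem quarticDisc_pos (h : IsQuadraticSplitting a b c e f A B) (hA : A < -1) (hAB : 0 < A + B) :
    0 < quarticDisc 1 a b c 1 := by
  have hdiscs : 0 < (A ^ 2 - 1) * (B ^ 2 - 1) := mul_pos (by nlinarith) (by nlinarith)
  have hres : 0 < (e ^ 2 + f ^ 2 - 2 * A * B) ^ 2 - 4 * ((A ^ 2 - 1) * (B ^ 2 - 1)) := by
    have hmul : A * B < 0 := mul_neg_of_neg_of_pos (by linarith) (by linarith)
    have hbase : 2 - 2 * (A * B) ≤ e ^ 2 + f ^ 2 - 2 * A * B := by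
      linarith [sq_nonneg (e - f), h.mul_eq_one]
    have hne : 0 < (A - B) ^ 2 := sq_pos_of_neg (by linarith)
    linarith [pow_le_pow_left₀ (by linarith) hbase 2]
  rw [h.quarticDisc_eq]
  positivity

theorem coeff_add_pos_iff (h : IsQuadraticSplitting a b c e f A B) : 0 < a + c ↔ 0 < A + B := by
  rw [h.coeff_add, mul_pos_iff_of_pos_left two_pos,
    mul_pos_iff_of_pos_left (add_pos h.left_pos h.right_pos)]

theorem neg_one_le_of_quarticDisc_nonpos (h : IsQuadraticSplitting a b c e f A B)
    (hD : quarticDisc 1 a b c 1 ≤ 0) (hac : 0 < a + c) : -1 ≤ A := by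
  by_contra! hA
  exact hD.not_gt (h.quarticDisc_pos hA (h.coeff_add_pos_iff.1 hac))

theorem neg_one_le_of_coeff_nonneg (h : IsQuadraticSplitting a b c e f A B)
    (ha : 0 ≤ a) (hb : 0 ≤ b + 2) (hc : 0 ≤ c) : -1 ≤ A := by
  by_contra! hA
  have hA2 : 0 < A ^ 2 - 1 := by nlinarith
  have hABe : A * B + e ^ 2 < 0 := by
    refine neg_of_mul_neg_right (a := f) ?_ h.right_pos.le
    calc f * (A * B + e ^ 2) = A * (a / 2) - e * (A ^ 2 - 1) := by
          rw [h.coeff_three]; linear_combination e * h.mul_eq_one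
      _ < 0 := by linarith [mul_pos h.left_pos hA2,
          mul_nonpos_of_nonpos_of_nonneg (show A ≤ 0 by linarith) ha]
  have hABf : A * B + f ^ 2 < 0 := by
    refine neg_of_mul_neg_right (a := e) ?_ h.left_pos.le
    calc e * (A * B + f ^ 2) = A * (c / 2) - f * (A ^ 2 - 1) := by
          rw [h.coeff_one]; linear_combination f * h.mul_eq_one
      _ < 0 := by linarith [mul_pos h.right_pos hA2,
          mul_nonpos_of_nonpos_of_nonneg (show A ≤ 0 by linarith) hc]
  linarith [h.coeff_two, h.mul_eq_one, sq_nonneg (e - f)]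

theorem abs_coeff_sub_le_iff (h : IsQuadraticSplitting a b c e f A B) (hb : -2 ≤ b) :
    |a - c| ≤ 4 * √(b + 2) ↔ (e - f) ^ 2 * ((A - B) ^ 2 - 4) ≤ 16 * (1 + A * B) := by
  rw [abs_le_mul_sqrt_iff_sq_le (by norm_num) (by linarith), h.coeff_sub, h.coeff_two_eq]
  constructor <;> intro _ <;> linarith

theorem abs_coeff_add_le_iff (h : IsQuadraticSplitting a b c e f A B) (hb : 2 ≤ b) :
    |a + c| ≤ 4 * √(b - 2) ↔ 4 * (A - B) ^ 2 ≤ (e - f) ^ 2 * (4 - (A + B) ^ 2) := by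
  rw [abs_le_mul_sqrt_iff_sq_le (by norm_num) (by linarith), h.coeff_add, mul_pow, mul_pow,
    h.add_sq, h.coeff_two_eq]
  constructor <;> intro _ <;> linarith

theorem eq_of_quarticDisc_nonneg_of_lt (h : IsQuadraticSplitting a b c e f A B)
    (hD : 0 ≤ quarticDisc 1 a b c 1) (hsub : |a - c| ≤ 4 * √(b + 2))
    (hb : (-2 ≤ b ∧ b ≤ 6) ∨ (6 < b ∧ -4 * √(b - 2) ≤ a + c)) (hA : A < -1) :
    A = B ∧ e = f := by
  have hb2 : -2 ≤ b := by rcases hb with hb | hb <;> linarith [hb.1]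
  have hB2 : 1 ≤ B ^ 2 := by
    have := (mul_nonneg_iff_of_pos_left (by nlinarith)).1 (h.quarticDisc_nonneg_iff.1 hD)
    linarith
  rcases le_abs'.1 ((one_le_sq_iff_one_le_abs B).1 hB2) with hB | hB
  · have hAB : 1 < A * B := by nlinarith
    have hadd : a + c ≤ 0 := not_lt.1 fun hpos => by linarith [h.coeff_add_pos_iff.1 hpos]
    have hb6 : 6 < b := by linarith [h.coeff_two_eq, sq_nonneg (e - f)]
    have habs : |a + c| ≤ 4 * √(b - 2) := by
      rw [abs_of_nonpos hadd]
      linarith [(hb.resolve_left fun hb' => hb'.2.not_gt hb6).2]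
    have hle := (h.abs_coeff_add_le_iff (by linarith)).1 habs
    have hgap : 0 < (A + B) ^ 2 - 4 := by nlinarith
    have hprod : 0 ≤ (e - f) ^ 2 * ((A + B) ^ 2 - 4) := by positivity
    have hAB0 : (A - B) ^ 2 = 0 := by linarith [sq_nonneg (A - B)]
    have hef0 : (e - f) ^ 2 = 0 :=
      (mul_eq_zero.1 (by linarith [sq_nonneg (A - B)])).resolve_right hgap.ne'
    exact ⟨sub_eq_zero.1 (sq_eq_zero_iff.1 hAB0),
      sub_eq_zero.1 (sq_eq_zero_iff.1 hef0)⟩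
  · exfalso
    have hAB : A * B < -1 := by nlinarith
    have hgap : 0 ≤ (A - B) ^ 2 - 4 := by nlinarith
    have hprod : 0 ≤ (e - f) ^ 2 * ((A - B) ^ 2 - 4) := by positivity
    linarith [(h.abs_coeff_sub_le_iff hb2).1 hsub]

theorem eq_of_quarticCriterion_of_lt (h : IsQuadraticSplitting a b c e f A B)
    (hcrit : QuarticCriterion 1 a b c 1) (hA : A < -1) : A = B ∧ e = f := by
  rcases quarticCriterion_one_iff.1 hcrit with ⟨hD, hac⟩ | ⟨hc, ha, hb⟩ | ⟨hD, hsub, hb⟩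
  · exact absurd hA (h.neg_one_le_of_quarticDisc_nonpos hD (by linarith)).not_gt
  · exact absurd hA (h.neg_one_le_of_coeff_nonneg ha hb hc).not_gt
  · exact h.eq_of_quarticDisc_nonneg_of_lt hD hsub hb hA

theorem quarticCriterion_of_sq_le_one (h : IsQuadraticSplitting a b c e f A B)
    (hA : A ^ 2 ≤ 1) (hB : B ^ 2 ≤ 1) : QuarticCriterion 1 a b c 1 := by
  have hdiscs : 0 ≤ (1 - A ^ 2) * (1 - B ^ 2) := mul_nonneg (by linarith) (by linarith)
  obtain ⟨hAB1, hAB2⟩ : -1 ≤ A * B ∧ A * B ≤ 1 := by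
    constructor <;> linarith [sq_nonneg (A + B), sq_nonneg (A - B)]
  have hsq_sub : (A - B) ^ 2 ≤ (1 - A * B) ^ 2 := by linarith
  have hsq_add : (A + B) ^ 2 ≤ (1 + A * B) ^ 2 := by linarith
  have hb2 : -2 ≤ b := by linarith [h.coeff_two_eq, sq_nonneg (e - f)]
  refine quarticCriterion_one_iff.2
    (.inr (.inr ⟨h.quarticDisc_nonneg_iff.2 (by linarith), ?_, ?_⟩))
  · have hdist : (A - B) ^ 2 ≤ 4 := by nlinarith
    rw [h.abs_coeff_sub_le_iff hb2]
    linarith [mul_nonneg (sq_nonneg (e - f)) (sub_nonneg.2 hdist)]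
  · refine (le_or_gt b 6).imp (fun hb6 => ⟨hb2, hb6⟩) fun hb6 => ⟨hb6, ?_⟩
    have hef : 4 * (1 - A * B) ≤ (e - f) ^ 2 := by linarith [h.coeff_two_eq]
    have habs : |a + c| ≤ 4 * √(b - 2) := by
      rw [h.abs_coeff_add_le_iff (by linarith)]
      have hgap : 0 ≤ 4 - (1 + A * B) ^ 2 := by nlinarith [hAB1, hAB2]
      calc 4 * (A - B) ^ 2 ≤ 4 * (1 - A * B) ^ 2 := by gcongr 4 * ?_
        _ ≤ 4 * (1 - A * B) * ((1 - A * B) * (3 + A * B)) := by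
          linarith [mul_nonneg (sq_nonneg (1 - A * B)) (by linarith : 0 ≤ 2 + A * B)]
        _ = 4 * (1 - A * B) * (4 - (1 + A * B) ^ 2) := by ring
        _ ≤ (e - f) ^ 2 * (4 - (1 + A * B) ^ 2) := by gcongr
        _ ≤ (e - f) ^ 2 * (4 - (A + B) ^ 2) := by gcongr
    linarith [neg_le_of_abs_le habs]

theorem quarticCriterion_of_neg_one_le (h : IsQuadraticSplitting a b c e f A B)
    (hA : -1 ≤ A) (hB : -1 ≤ B) : QuarticCriterion 1 a b c 1 := by
  wlog hBA : B ≤ A generalizing e f A B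
  · exact this h.symm hB hA (le_of_not_ge hBA)
  rcases le_or_gt A 1 with hA1 | hA1
  · exact h.quarticCriterion_of_sq_le_one (by nlinarith) (by nlinarith)
  have he := h.left_pos
  have hf := h.right_pos
  rw [quarticCriterion_one_iff]
  rcases le_or_gt 1 B with hB1 | hB1
  · right; left
    rw [h.coeff_three, h.coeff_two, h.coeff_one]
    exact ⟨by positivity, by positivity, by positivity⟩
  · left
    constructor
    · rw [h.quarticDisc_eq]
      refine mul_nonpos_of_nonpos_of_nonneg ?_ (sq_nonneg _)
      linarith [mul_nonneg (show 0 ≤ A ^ 2 - 1 by nlinarith) (show 0 ≤ 1 - B ^ 2 by nlinarith)]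
    · rw [add_comm, h.coeff_add_pos_iff]
      linarith

theorem quarticCriterion_of_eq (h : IsQuadraticSplitting a b c e f A B) (hAB : A = B)
    (hef : e = f) : QuarticCriterion 1 a b c 1 := by
  subst hAB hef
  have hb := h.coeff_two_eq
  have hb2 : 2 ≤ b := by linarith [mul_self_nonneg A, sq_nonneg (e - e)]
  refine quarticCriterion_one_iff.2 (.inr (.inr
    ⟨h.quarticDisc_nonneg_iff.2 (mul_self_nonneg _), ?_, ?_⟩))
  · rw [h.abs_coeff_sub_le_iff (by linarith)]
    linarith [mul_self_nonneg A]
  · refine (le_or_gt b 6).imp (fun hb6 => ⟨by linarith, hb6⟩) fun hb6 => ⟨hb6, ?_⟩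
    have habs : |a + c| ≤ 4 * √(b - 2) := (h.abs_coeff_add_le_iff hb2).2 (by simp)
    linarith [neg_le_of_abs_le habs]

theorem quarticCriterion_iff (h : IsQuadraticSplitting a b c e f A B) :
    QuarticCriterion 1 a b c 1 ↔ (-1 ≤ A ∧ -1 ≤ B) ∨ (A = B ∧ e = f) := by
  constructor
  · intro hcrit
    rcases lt_or_ge A (-1) with hA | hA
    · exact .inr (h.eq_of_quarticCriterion_of_lt hcrit hA)
    rcases lt_or_ge B (-1) with hB | hB
    · exact .inr ((h.symm.eq_of_quarticCriterion_of_lt hcrit hB).imp Eq.symm Eq.symm)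
    exact .inl ⟨hA, hB⟩
  · rintro (⟨hA, hB⟩ | ⟨hAB, hef⟩)
    · exact h.quarticCriterion_of_neg_one_le hA hB
    · exact h.quarticCriterion_of_eq hAB hef

end IsQuadraticSplitting

theorem isCopositiveQuartic_rescale_iff {p q : ℝ} (hp : 0 < p) (hq : 0 < q) (a b c : ℝ) :
    IsCopositiveQuartic (p ^ 4) (p ^ 3 * q * a) (p ^ 2 * q ^ 2 * b) (p * q ^ 3 * c) (q ^ 4) ↔
      IsCopositiveQuartic 1 a b c 1 := by
  constructor
  · intro h x y hx hy
    convert h (x / p) (y / q) (by positivity) (by positivity) using 1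
    field_simp
  · intro h x y hx hy
    convert h (p * x) (q * y) (by positivity) (by positivity) using 1
    ring

theorem quarticDisc_rescale (p q a b c : ℝ) :
    quarticDisc (p ^ 4) (p ^ 3 * q * a) (p ^ 2 * q ^ 2 * b) (p * q ^ 3 * c) (q ^ 4) =
      (p * q) ^ 12 * quarticDisc 1 a b c 1 := by
  simp only [quarticDisc]
  ring

theorem sqrt_pow_four (p : ℝ) : √(p ^ 4) = p ^ 2 := by
  rw [show p ^ 4 = (p ^ 2) ^ 2 by ring, Real.sqrt_sq (sq_nonneg p)]

theorem quarticCriterion_rescale_iff {p q : ℝ} (hp : 0 < p) (hq : 0 < q) (a b c : ℝ) :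
    QuarticCriterion (p ^ 4) (p ^ 3 * q * a) (p ^ 2 * q ^ 2 * b) (p * q ^ 3 * c) (q ^ 4) ↔
      QuarticCriterion 1 a b c 1 := by
  have hw2 : 0 < (p * q) ^ 2 := by positivity
  have hw3 : 0 < (p * q) ^ 3 := by positivity
  have hw12 : 0 < (p * q) ^ 12 := by positivity
  have hsqrt : √(p ^ 4 * q ^ 4) = (p * q) ^ 2 := by rw [← mul_pow, sqrt_pow_four]
  have hsqrt_scale (z : ℝ) : √(z * (p * q) ^ 6) = √z * (p * q) ^ 3 := by
    rw [Real.sqrt_mul' _ (by positivity), show (p * q) ^ 6 = ((p * q) ^ 3) ^ 2 by ring,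
      Real.sqrt_sq hw3.le]
  have hrad_add : √(p ^ 4 * (p ^ 2 * q ^ 2 * b) * q ^ 4 + 2 * p ^ 4 * q ^ 4 * (p * q) ^ 2) =
      √(b + 2) * (p * q) ^ 3 := by rw [← hsqrt_scale]; ring_nf
  have hrad_sub : √(p ^ 4 * (p ^ 2 * q ^ 2 * b) * q ^ 4 - 2 * p ^ 4 * q ^ 4 * (p * q) ^ 2) =
      √(b - 2) * (p * q) ^ 3 := by rw [← hsqrt_scale]; ring_nf
  have ha : p ^ 3 * q * a * q ^ 2 = a * (p * q) ^ 3 := by ring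
  have hc : p * q ^ 3 * c * p ^ 2 = c * (p * q) ^ 3 := by ring
  have hb : p ^ 2 * q ^ 2 * b = b * (p * q) ^ 2 := by ring
  have ha_nonneg : 0 ≤ p ^ 3 * q * a ↔ 0 ≤ a := mul_nonneg_iff_of_pos_left (by positivity)
  have hc_nonneg : 0 ≤ p * q ^ 3 * c ↔ 0 ≤ c := mul_nonneg_iff_of_pos_left (by positivity)
  have hdisc_nonpos : (p * q) ^ 12 * quarticDisc 1 a b c 1 ≤ 0 ↔ quarticDisc 1 a b c 1 ≤ 0 := by
    simpa only [mul_zero] using mul_le_mul_iff_right₀ (c := 0) hw12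
  rw [quarticCriterion_one_iff, QuarticCriterion, quarticDisc_rescale, hdisc_nonpos, ha_nonneg,
    hc_nonneg, mul_nonneg_iff_of_pos_left hw12, sqrt_pow_four, sqrt_pow_four, hsqrt, hrad_add,
    hrad_sub, ha, hb, hc]
  simp only [← add_mul, ← sub_mul, ← mul_assoc, abs_mul, abs_of_pos hw3, hw2, hw3,
    mul_nonneg_iff_of_pos_right, mul_pos_iff_of_pos_right, mul_le_mul_iff_left₀,
    mul_lt_mul_iff_left₀]

theorem exists_pos_pow_eq {x : ℝ} {n : ℕ} (hn : n ≠ 0) (hx : 0 < x) :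
    ∃ p : ℝ, 0 < p ∧ p ^ n = x :=
  ⟨x ^ (n : ℝ)⁻¹, by positivity, Real.rpow_inv_natCast_pow hx.le hn⟩

theorem isCopositiveQuartic_one_iff (a b c : ℝ) :
    IsCopositiveQuartic 1 a b c 1 ↔ QuarticCriterion 1 a b c 1 := by
  obtain ⟨e, f, A, B, h⟩ := exists_isQuadraticSplitting a b c
  rw [h.isCopositiveQuartic_iff, h.quarticCriterion_iff]

theorem discriminant_quartic_nonneg_iff_general {l40 l04 : ℝ} (l31 l22 l13 : ℝ)
    (hl40 : 0 < l40) (hl04 : 0 < l04) :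
    IsCopositiveQuartic l40 l31 l22 l13 l04 ↔ QuarticCriterion l40 l31 l22 l13 l04 := by
  obtain ⟨p, hp, rfl⟩ := exists_pos_pow_eq four_ne_zero hl40
  obtain ⟨q, hq, rfl⟩ := exists_pos_pow_eq four_ne_zero hl04
  obtain ⟨a, rfl⟩ : ∃ a, p ^ 3 * q * a = l31 := ⟨l31 / (p ^ 3 * q), by field_simp⟩
  obtain ⟨b, rfl⟩ : ∃ b, p ^ 2 * q ^ 2 * b = l22 := ⟨l22 / (p ^ 2 * q ^ 2), by field_simp⟩
  obtain ⟨c, rfl⟩ : ∃ c, p * q ^ 3 * c = l13 := ⟨l13 / (p * q ^ 3), by field_simp⟩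
  rw [isCopositiveQuartic_rescale_iff hp hq, quarticCriterion_rescale_iff hp hq,
    isCopositiveQuartic_one_iff]

/-- Necessary and sufficient condition for `4λ_S Ṽ(h₁,h₂) − M(h₁,h₂)² ≥ 0` on `ℝ²₊`,
given `λ₄₀' > 0` and `λ₀₄' > 0`, in terms of the primed coefficients of the binary
quartic `4λ_S Ṽ − M²`. -/
theorem discriminant_quartic_nonneg_iff (l1 l2 l3 l4 lS lS1 lS2 mu rho : ℝ)
    (hmu : 0 ≤ mu) (hrho : rho ∈ Set.Icc (0 : ℝ) 1)
    (l40 l04 l31 l13 l22 D : ℝ)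
    (h40 : l40 = 4 * lS * l1 - lS1 ^ 2)
    (h04 : l04 = 4 * lS * l2 - lS2 ^ 2)
    (h31 : l31 = 2 * lS1 * mu * rho)
    (h13 : l13 = 2 * lS2 * mu * rho)
    (h22 : l22 = 4 * lS * l3 + 4 * lS * l4 * rho ^ 2 - mu ^ 2 * rho ^ 2 - 2 * lS1 * lS2)
    (hD : D = 4 * (12 * l40 * l04 - 3 * l31 * l13 + l22 ^ 2) ^ 3 -
      (72 * l40 * l22 * l04 + 9 * l31 * l22 * l13 - 2 * l22 ^ 3 -
        27 * l40 * l13 ^ 2 - 27 * l31 ^ 2 * l04) ^ 2)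
    (hl40 : 0 < l40) (hl04 : 0 < l04) :
    (∀ h1 h2 : ℝ, 0 ≤ h1 → 0 ≤ h2 →
        0 ≤ 4 * lS * (l1 * h1 ^ 4 + l2 * h2 ^ 4 + (l3 + l4 * rho ^ 2) * h1 ^ 2 * h2 ^ 2) -
          (lS1 * h1 ^ 2 + lS2 * h2 ^ 2 - mu * rho * h1 * h2) ^ 2) ↔
      ((D ≤ 0 ∧ 0 < l13 * Real.sqrt l40 + l31 * Real.sqrt l04) ∨
       (0 ≤ l13 ∧ 0 ≤ l31 ∧ 0 ≤ l22 + 2 * Real.sqrt (l40 * l04)) ∨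
       (0 ≤ D ∧
        |l31 * Real.sqrt l04 - l13 * Real.sqrt l40| ≤
          4 * Real.sqrt (l40 * l22 * l04 + 2 * l40 * l04 * Real.sqrt (l40 * l04)) ∧
        ((-2 * Real.sqrt (l40 * l04) ≤ l22 ∧ l22 ≤ 6 * Real.sqrt (l40 * l04)) ∨
         (6 * Real.sqrt (l40 * l04) < l22 ∧
          -4 * Real.sqrt (l40 * l22 * l04 - 2 * l40 * l04 * Real.sqrt (l40 * l04)) ≤
            l31 * Real.sqrt l04 + l13 * Real.sqrt l40)))) := by
  subst hD
  refine .trans (forall₄_congr fun h1 h2 _ _ => ?_)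
    (discriminant_quartic_nonneg_iff_general l31 l22 l13 hl40 hl04)
  rw [h40, h31, h22, h13, h04]
  ring_nf
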